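/- (Strict positivity of the acyclicity penalty on cyclic graphs.) Let d : ℕ and let A : Matrix (Fin d) (Fin d) ℝ be a binary adjacency matrix. If A is not acyclic (i.e., the directed graph induced by A contains a directed cycle), then trace(Matrix.exp A) > d, i.e., h(A) > 0. -/

import Mathlib

/-- A binary adjacency matrix: every entry is 0 or 1. -/
def IsBinary {d : ℕ} (A : Matrix (Fin d) (Fin d) ℝ) : Prop :=
  ∀ i j, A i j = 0 ∨ A i j = 1

/-- The directed graph induced by `A` (edge `i → j` iff `A i j = 1`) is acyclic. -/
def IsAcyclicMat {d : ℕ} (A : Matrix (Fin d) (Fin d) ℝ) : Prop :=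
  Irreflexive (Relation.TransGen (fun i j => A i j = 1))

/-- The smooth acyclicity function `h(A) = trace (exp A) - d`. -/
noncomputable def hAcyc {d : ℕ} (A : Matrix (Fin d) (Fin d) ℝ) : ℝ :=
  Matrix.trace (NormedSpace.exp A) - d

open Classical in
/-- The penalized objective `F(A) = S(A) + λ₁·1[A ∉ DAGs] + λ₂·h(A)`. -/
noncomputable def penObj {d : ℕ} (S : Matrix (Fin d) (Fin d) ℝ → ℝ) (lam1 lam2 : ℝ)
    (A : Matrix (Fin d) (Fin d) ℝ) : ℝ :=
  S A + lam1 * (if IsAcyclicMat A then (0 : ℝ) else 1) + lam2 * hAcyc A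

/-!
In the series `trace (exp A) = ∑ trace (A ^ k) / k!` every term is nonnegative and the term `k = 0`
is the number of vertices. The entry `(A ^ k) i i` is the total weight of the closed walks of
length `k` at `i`, so a directed cycle of length `k` makes the `k`-th term strictly positive.
-/

open Matrix Relation
open scoped Nat

theorem exists_path_length_pos_of_transGen {V : Type*} [Quiver V] {a b : V}
    (hab : TransGen (fun x y : V ↦ Nonempty (x ⟶ y)) a b) :
    ∃ p : Quiver.Path a b, 0 < p.length := by
  induction hab with
  | single hab => exact ⟨hab.some.toPath, Nat.one_pos⟩
  | tail _ hbc ih =>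
    obtain ⟨p, -⟩ := ih
    exact ⟨p.cons hbc.some, Nat.succ_pos _⟩

section NonnegativeMatrix

variable {n R : Type*} [Fintype n]

theorem trace_nonneg_of_diag_nonneg [AddCommMonoid R] [PartialOrder R] [IsOrderedAddMonoid R]
    {A : Matrix n n R} (hA : ∀ i, 0 ≤ A i i) : 0 ≤ trace A :=
  Finset.sum_nonneg fun i _ ↦ hA i

theorem trace_pos_of_diag_nonneg [AddCommMonoid R] [PartialOrder R] [IsOrderedCancelAddMonoid R]
    {A : Matrix n n R} (hA : ∀ i, 0 ≤ A i i) {i : n} (hi : 0 < A i i) : 0 < trace A :=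
  Finset.sum_pos' (fun j _ ↦ hA j) ⟨i, Finset.mem_univ i, hi⟩

variable [DecidableEq n] [Ring R] [LinearOrder R] [IsOrderedRing R] [PosMulStrictMono R]
  [Nontrivial R] {A : Matrix n n R}

theorem exists_pow_apply_pos_of_transGen (hA : ∀ i j, 0 ≤ A i j) {i j : n}
    (hij : TransGen (fun x y ↦ 0 < A x y) i j) : ∃ k, 0 < k ∧ 0 < (A ^ k) i j := by
  let := A.toQuiver
  obtain ⟨p, hp⟩ := exists_path_length_pos_of_transGen <|
    TransGen.mono (fun _ _ hxy ↦ ⟨⟨hxy⟩⟩) _ _ hij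
  exact ⟨p.length, hp, (pow_apply_pos_iff_nonempty_path hA _ i j).2 ⟨p, rfl⟩⟩

theorem exists_trace_pow_pos_of_transGen_self (hA : ∀ i j, 0 ≤ A i j) {i : n}
    (hi : TransGen (fun x y ↦ 0 < A x y) i i) : ∃ k, 0 < k ∧ 0 < trace (A ^ k) := by
  obtain ⟨k, hk, hpos⟩ := exists_pow_apply_pos_of_transGen hA hi
  exact ⟨k, hk, trace_pos_of_diag_nonneg (fun j ↦ pow_apply_nonneg hA k j j) hpos⟩

end NonnegativeMatrix

section Exponential

variable {n : Type*} [Fintype n] [DecidableEq n]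

variable (𝕂 : Type*) {𝔸 : Type*} [RCLike 𝕂] [NormedRing 𝔸] [NormedAlgebra 𝕂 𝔸] [CompleteSpace 𝔸]

theorem hasSum_matrix_exp (A : Matrix n n 𝔸) :
    HasSum (fun k : ℕ ↦ (k !⁻¹ : 𝕂) • A ^ k) (NormedSpace.exp A) := by
  open scoped Matrix.Norms.Operator in
  -- The uniformity of the operator norm agrees with the product uniformity only after unfolding
  -- instances, so instance search does not find its completeness.
  have : @CompleteSpace (Matrix n n 𝔸) PseudoMetricSpace.toUniformSpace :=
    inferInstanceAs (CompleteSpace (n → n → 𝔸))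
  exact NormedSpace.exp_series_hasSum_exp' A

theorem hasSum_trace_exp (A : Matrix n n 𝔸) :
    HasSum (fun k : ℕ ↦ (k !⁻¹ : 𝕂) • trace (A ^ k)) (trace (NormedSpace.exp A)) := by
  simpa only [Function.comp_def, traceAddMonoidHom_apply, trace_smul] using
    (hasSum_matrix_exp 𝕂 A).map (traceAddMonoidHom n 𝔸) continuous_id.matrix_trace

variable {A : Matrix n n ℝ}

theorem card_add_trace_pow_div_factorial_le_trace_exp (hA : ∀ i j, 0 ≤ A i j) {k : ℕ}
    (hk : 0 < k) : (Fintype.card n : ℝ) + trace (A ^ k) / k ! ≤ trace (NormedSpace.exp A) := by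
  have hterm (m : ℕ) : 0 ≤ (m !⁻¹ : ℝ) • trace (A ^ m) :=
    smul_nonneg (by positivity) (trace_nonneg_of_diag_nonneg fun i ↦ pow_apply_nonneg hA m i i)
  calc (Fintype.card n : ℝ) + trace (A ^ k) / k !
      = ∑ m ∈ {0, k}, (m !⁻¹ : ℝ) • trace (A ^ m) := by
        simp [Finset.sum_pair hk.ne, div_eq_inv_mul]
    _ ≤ trace (NormedSpace.exp A) := sum_le_hasSum _ (fun m _ ↦ hterm m) (hasSum_trace_exp ℝ A)

theorem trace_exp_gt_of_not_acyclic_general (hA : ∀ i j, 0 ≤ A i j)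
    (hcyc : ∃ i, TransGen (fun x y ↦ 0 < A x y) i i) :
    (Fintype.card n : ℝ) < trace (NormedSpace.exp A) := by
  obtain ⟨i, hi⟩ := hcyc
  obtain ⟨k, hk, hpos⟩ := exists_trace_pow_pos_of_transGen_self hA hi
  calc (Fintype.card n : ℝ)
      < Fintype.card n + trace (A ^ k) / k ! := lt_add_of_pos_right _ (by positivity)
    _ ≤ trace (NormedSpace.exp A) := card_add_trace_pow_div_factorial_le_trace_exp hA hk

end Exponential

theorem IsBinary.nonneg {d : ℕ} {A : Matrix (Fin d) (Fin d) ℝ} (hA : IsBinary A) (i j : Fin d) :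
    0 ≤ A i j := by
  rcases hA i j with h | h <;> simp [h]

theorem exists_transGen_self_of_not_isAcyclicMat {d : ℕ} {A : Matrix (Fin d) (Fin d) ℝ}
    (hcyc : ¬ IsAcyclicMat A) : ∃ i, TransGen (fun x y ↦ 0 < A x y) i i := by
  by_contra! hacyc
  exact hcyc fun i hi ↦ hacyc i (TransGen.mono (fun _ _ hxy ↦ hxy ▸ one_pos) _ _ hi)

theorem trace_exp_gt_of_not_acyclic (d : ℕ) (A : Matrix (Fin d) (Fin d) ℝ)
    (hA : IsBinary A) (hcyc : ¬ IsAcyclicMat A) :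
    (d : ℝ) < Matrix.trace (NormedSpace.exp A) := by
  simpa only [Fintype.card_fin] using
    trace_exp_gt_of_not_acyclic_general hA.nonneg (exists_transGen_self_of_not_isAcyclicMat hcyc)
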